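/- arXiv:1311.1488 — 2 statements merged into one kernel-verified Lean document; each statement's English description precedes it below -/
import Mathlib

section
/- Let ℓ_N = ⌈log₂ N⌉. Then pointwise on the underlying probability space (i.e. for every realization of the jump variables), for every n ≥ 0 one has R^{N,ℓ_N}(n − ℓ_N) ≤ 𝒴_1(n) and R^{N,ℓ_N}(n) ≤ 𝒴_N(n). -/
open MeasureTheory ProbabilityTheory Real Filter Set

noncomputable section

/-- One step of the `N`-BRW: each of the `N` particles branches into two, the children jump
according to `jump`, and only the `N` right-most particles are kept; the result is the
sorted (ascending) vector of the `N` retained positions. -/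
def brwStep (N : ℕ) (pos : Fin N → ℝ) (jump : Fin N → Fin 2 → ℝ) : Fin N → ℝ := fun i =>
  (((Finset.univ : Finset (Fin N × Fin 2)).val.map fun p => pos p.1 + jump p.1 p.2).sort
      (· ≤ ·)).getD (N + i) 0

/-- The `N`-BRW started from the sorted configuration `x0`, driven by the jumps `jump`:
`brw N x0 jump n i` is the position `X_{i+1}(n)` of the `(i+1)`-th lowest particle at time `n`. -/
def brw (N : ℕ) (x0 : Fin N → ℝ) (jump : ℕ → Fin N → Fin 2 → ℝ) : ℕ → Fin N → ℝ
  | 0 => x0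
  | n + 1 => brwStep N (brw N x0 jump n) (jump n)

/-- Position `X_N(n)` of the right-most particle of the `N`-BRW started at the origin. -/
def brwMax (N : ℕ) (jump : ℕ → Fin N → Fin 2 → ℝ) (n : ℕ) : ℝ :=
  ⨆ i, brw N (fun _ => 0) jump n i

/-- Position `X_1(n)` of the left-most particle of the `N`-BRW started at the origin. -/
def brwMin (N : ℕ) (jump : ℕ → Fin N → Fin 2 → ℝ) (n : ℕ) : ℝ :=
  ⨅ i, brw N (fun _ => 0) jump n i

/-- The `(N,ℓ)`-discretised stairs process driven by the jumps `Y`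
(with the convention `R(k) = 0` for `k ≤ 0`, realised via truncated subtraction). -/
def dsp (N ℓ : ℕ) (Y : ℕ → Fin N → Fin 2 → ℝ) : ℕ → ℝ
  | 0 => 0
  | n + 1 => max (dsp N ℓ Y n) (dsp N ℓ Y (n - ℓ) + ⨆ p : Fin N × Fin 2, Y n p.1 p.2)

/-- The tail `P(X > x) = 1/h(x)` of the random variable `X` under `P`. -/
def tail {Ω : Type*} [MeasurableSpace Ω] (P : Measure Ω) (X : Ω → ℝ) (x : ℝ) : ℝ :=
  (P {ω | x < X ω}).toReal

/-- Generalized inverse `h⁻¹(y)` of `h(x) = 1 / P(X > x)`. -/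
def hinv {Ω : Type*} [MeasurableSpace Ω] (P : Measure Ω) (X : Ω → ℝ) (y : ℝ) : ℝ :=
  sInf {x : ℝ | 0 ≤ x ∧ tail P X x ≤ y⁻¹}

/-- The scaling sequence `c_N = h⁻¹(2 N log₂ N)`. -/
def cN {Ω : Type*} [MeasurableSpace Ω] (P : Measure Ω) (X : Ω → ℝ) (N : ℕ) : ℝ :=
  hinv P X (2 * N * Real.logb 2 N)

lemma sorted_getD_ge (L : List ℝ) (hL : L.Pairwise (· ≤ ·)) (a : ℝ) (k m : ℕ)
    (hk : k ≤ L.countP (fun x => decide (a ≤ x))) (hm : m < L.length)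
    (hmk : L.length ≤ m + k) : a ≤ L.getD m 0 := by
  by_contra hlt
  push Not at hlt
  have h1 : L.getD m 0 = L[m] := by simp [hm]
  rw [h1] at hlt
  have h2 : (L.take (m+1)).countP (fun x => decide (a ≤ x)) = 0 := by
    rw [List.countP_eq_zero]
    intro x hx
    obtain ⟨j, hj, rfl⟩ := List.getElem_of_mem hx
    simp only [List.getElem_take, decide_eq_true_eq, not_le]
    simp only [List.length_take] at hj
    rcases Nat.lt_or_ge j m with h | h
    · exact lt_of_le_of_lt (List.pairwise_iff_getElem.mp hL j m (by omega) hm h) hlt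
    · have : j = m := by omega
      subst this; exact hlt
  have h3 : (L.drop (m+1)).countP (fun x => decide (a ≤ x)) ≤ L.length - (m+1) := by
    simpa using (List.countP_le_length (p := fun x => decide (a ≤ x)) (l := L.drop (m+1)))
  have h4 := congrArg (List.countP (fun x => decide (a ≤ x))) (List.take_append_drop (m+1) L)
  rw [List.countP_append] at h4
  omega

lemma brwStep_ge (N : ℕ) (pos : Fin N → ℝ) (jump : Fin N → Fin 2 → ℝ) (a : ℝ) (k : ℕ)
    (S : Finset (Fin N × Fin 2)) (hS : ∀ p ∈ S, a ≤ pos p.1 + jump p.1 p.2)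
    (hk : k ≤ S.card) (i : Fin N) (hi : N ≤ i + k) : a ≤ brwStep N pos jump i := by
  unfold brwStep
  set M := (Finset.univ : Finset (Fin N × Fin 2)).val.map fun p => pos p.1 + jump p.1 p.2 with hM
  have hlen : (M.sort (· ≤ ·)).length = N * 2 := by
    simp [hM]
  apply sorted_getD_ge _ (Multiset.pairwise_sort M (· ≤ ·)) a k
  · rw [← Multiset.coe_countP, Multiset.sort_eq, hM, Multiset.countP_map]
    refine hk.trans ?_
    have : S.card ≤ (Finset.univ.filter fun p : Fin N × Fin 2 => a ≤ pos p.1 + jump p.1 p.2).card :=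
      Finset.card_le_card (fun p hp => by simp [hS p hp])
    exact this
  · rw [hlen]; omega
  · rw [hlen]; omega

/-- The top `k` particles are at or above `a`. -/
def TopGe (N : ℕ) (x : Fin N → ℝ) (k : ℕ) (a : ℝ) : Prop :=
  ∀ i : Fin N, N ≤ i + k → a ≤ x i

lemma TopGe.mono {N : ℕ} {x : Fin N → ℝ} {k l : ℕ} {a b : ℝ} (h : TopGe N x k a) (hl : l ≤ k)
    (hb : b ≤ a) : TopGe N x l b := fun i hi => hb.trans (h i (by omega))

lemma TopGe.step {N : ℕ} {x : Fin N → ℝ} {k : ℕ} {a : ℝ} (h : TopGe N x k a)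
    (jump : Fin N → Fin 2 → ℝ) (hj : ∀ i j, 0 ≤ jump i j) :
    TopGe N (brwStep N x jump) (2 * k) a := by
  intro i hi
  have hinj : Function.Injective (fun j : Fin (min k N) => (⟨N - 1 - j, by omega⟩ : Fin N)) := by
    intro u v huv
    simp only [Fin.mk.injEq] at huv
    ext
    omega
  set T : Finset (Fin N) := Finset.univ.map ⟨_, hinj⟩ with hT
  have hTc : T.card = min k N := by simp [hT]
  have hTm : ∀ t ∈ T, a ≤ x t := by
    intro t ht
    simp only [hT, Finset.mem_map, Finset.mem_univ, true_and, Function.Embedding.coeFn_mk] at ht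
    obtain ⟨j, rfl⟩ := ht
    apply h
    simp only
    omega
  refine brwStep_ge N x jump a (min k N * 2) (T ×ˢ Finset.univ) ?_ ?_ i (by omega)
  · intro p hp
    have := hTm p.1 (by simpa using hp)
    have := hj p.1 p.2
    linarith
  · simp [Finset.card_product, hTc]

lemma TopGe.brw_add {N : ℕ} {x0 : Fin N → ℝ} {J : ℕ → Fin N → Fin 2 → ℝ}
    (hJ : ∀ n i j, 0 ≤ J n i j) {n k : ℕ} {a : ℝ} (h : TopGe N (brw N x0 J n) k a) (m : ℕ) :
    TopGe N (brw N x0 J (n + m)) (2 ^ m * k) a := by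
  induction m with
  | zero => simpa using h
  | succ m ih =>
    have := ih.step (J (n + m)) (hJ _)
    rw [pow_succ', mul_assoc]
    exact this

lemma topGe_zero {N : ℕ} {J : ℕ → Fin N → Fin 2 → ℝ}
    (hJ : ∀ n i j, 0 ≤ J n i j) (n : ℕ) : TopGe N (brw N (fun _ => 0) J n) N 0 := by
  have h0 : TopGe N (brw N (fun _ => 0) J 0) N 0 := fun i _ => le_rfl
  have := h0.brw_add hJ n
  rw [zero_add] at this
  exact this.mono (Nat.le_mul_of_pos_left _ (by positivity)) le_rfl

lemma topGe_all {N : ℕ} {J : ℕ → Fin N → Fin 2 → ℝ}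
    (hJ : ∀ n i j, 0 ≤ J n i j) (n : ℕ)
    (h : ∀ m ≤ n, TopGe N (brw N (fun _ => 0) J m) 1 (dsp N (Nat.clog 2 N) J m)) :
    TopGe N (brw N (fun _ => 0) J n) N (dsp N (Nat.clog 2 N) J (n - Nat.clog 2 N)) := by
  rcases Nat.le_total n (Nat.clog 2 N) with hle | hle
  · rw [Nat.sub_eq_zero_of_le hle]
    simpa only [dsp] using topGe_zero hJ n
  · have := (h (n - Nat.clog 2 N) (by omega)).brw_add hJ (Nat.clog 2 N)
    rw [Nat.sub_add_cancel hle, mul_one] at this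
    exact this.mono (Nat.le_pow_clog (by norm_num) N) le_rfl

lemma topGe_max {N : ℕ} (hN : 1 ≤ N) {J : ℕ → Fin N → Fin 2 → ℝ}
    (hJ : ∀ n i j, 0 ≤ J n i j) (n : ℕ) :
    TopGe N (brw N (fun _ => 0) J n) 1 (dsp N (Nat.clog 2 N) J n) := by
  induction n using Nat.strong_induction_on with
  | _ n ih =>
    cases n with
    | zero =>
      intro i _
      simp [dsp, brw]
    | succ n =>
      intro i hi
      haveI : Nonempty (Fin N × Fin 2) := ⟨(⟨0, hN⟩, 0)⟩
      rw [dsp]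
      apply max_le
      · exact (((ih n (by omega)).brw_add hJ 1).mono (l := 1) (by norm_num) le_rfl) i hi
      · obtain ⟨p, hp⟩ := exists_eq_ciSup_of_finite (f := fun p : Fin N × Fin 2 => J n p.1 p.2)
        rw [← hp]
        refine brwStep_ge N _ (J n) _ 1 {p} ?_ (by simp) i hi
        intro q hq
        rw [Finset.mem_singleton] at hq
        subst hq
        have := topGe_all hJ n (fun m hm => ih m (by omega)) q.1 (by omega)
        linarith

/-- Proposition "lower bound": with `ℓ_N = ⌈log₂ N⌉`, for every realization of
the jump variables and every `n ≥ 0`, `R^{N,ℓ_N}(n − ℓ_N) ≤ 𝒴_1(n)` and `R^{N,ℓ_N}(n) ≤ 𝒴_N(n)`,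
where `𝒴_i(n) = X_i(n)/c_N` is the rescaled `N`-BRW and `R^{N,ℓ_N}` is the discretised stairs
process driven by the rescaled jumps `Y_{n,i} = X_{n,i}/c_N`. -/
theorem stmt_0 {Ω : Type*} [MeasurableSpace Ω] (P : Measure Ω) [IsProbabilityMeasure P]
    (X : Ω → ℝ) (hXmeas : Measurable X) (hXpos : ∀ ω, 0 ≤ X ω)
    (α : ℝ) (hα : 0 < α)
    (hRV : ∀ l : ℝ, 0 < l →
      Tendsto (fun x => tail P X x / tail P X (l * x)) atTop (nhds (l ^ α)))
    (N : ℕ) (hN : 1 ≤ N)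
    (ξ : ℕ → Fin N → Fin 2 → Ω → ℝ)
    (hξmeas : ∀ n i j, Measurable (ξ n i j))
    (hξpos : ∀ n i j ω, 0 ≤ ξ n i j ω)
    (hξdist : ∀ n i j, Measure.map (ξ n i j) P = Measure.map X P)
    (hξindep : iIndepFun
      (fun p : ℕ × Fin N × Fin 2 => ξ p.1 p.2.1 p.2.2) P)
    (ω : Ω) (n : ℕ) :
    dsp N (Nat.clog 2 N) (fun k i j => ξ k i j ω / cN P X N) (n - Nat.clog 2 N) ≤
        brwMin N (fun k i j => ξ k i j ω / cN P X N) n ∧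
      dsp N (Nat.clog 2 N) (fun k i j => ξ k i j ω / cN P X N) n ≤
        brwMax N (fun k i j => ξ k i j ω / cN P X N) n := by
  have hc : 0 ≤ cN P X N := Real.sInf_nonneg (fun x hx => hx.1)
  have hJ : ∀ k i j, 0 ≤ (fun k i j => ξ k i j ω / cN P X N : ℕ → Fin N → Fin 2 → ℝ) k i j :=
    fun k i j => div_nonneg (hξpos k i j ω) hc
  generalize (fun k i j => ξ k i j ω / cN P X N : ℕ → Fin N → Fin 2 → ℝ) = J at hJ ⊢
  haveI : Nonempty (Fin N) := ⟨⟨0, hN⟩⟩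
  constructor
  · exact le_ciInf fun i => topGe_all hJ n (fun m _ => topGe_max hN hJ m) i (by omega)
  · have h := topGe_max hN hJ n ⟨N - 1, by omega⟩ (by simp only; omega)
    exact h.trans (le_ciSup (f := fun i => brw N (fun _ => 0) J n i)
      (Set.finite_range _).bddAbove ⟨N - 1, by omega⟩)

end
end

section
/- For every ε > 0 there exists N₀ such that for all N ≥ N₀, all integers m with (1/2)·log₂ N ≤ m ≤ 2·log₂ N, all real x ≥ m^{max(1, 1/α) + ε}/c_N and all n ≥ 0, one has almost surely P( θ^{(m)}_{n+1} − θ^{(m)}_n > x | F_{n−m} ) ≤ N · m · 2^{m+1} / h(c_N x)². -/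
open MeasureTheory ProbabilityTheory Real Filter Set

noncomputable section

/-- The σ-algebra `F_n` generated by the jump variables `ξ k i j`, `0 ≤ k ≤ n-1`
(the trivial σ-algebra for `n = 0`). -/
def brwFilt {Ω : Type*} [MeasurableSpace Ω] (N : ℕ) (ξ : ℕ → Fin N → Fin 2 → Ω → ℝ) (n : ℕ) :
    MeasurableSpace Ω :=
  ⨆ (k : ℕ) (_ : k < n) (i : Fin N) (j : Fin 2), MeasurableSpace.comap (ξ k i j) inferInstance

/-- `θ^{(m)}_n = max_{0 ≤ k ≤ n} (𝒴_N(k) − R^{N,m}(k))`. -/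
def theta (N m : ℕ) (Y : ℕ → Fin N → Fin 2 → ℝ) (n : ℕ) : ℝ :=
  (Finset.range (n + 1)).sup' Finset.nonempty_range_add_one fun k => brwMax N Y k - dsp N m Y k


/-- Values of the children. -/
def cval (N : ℕ) (pos : Fin N → ℝ) (jump : Fin N → Fin 2 → ℝ) (q : Fin (N * 2)) : ℝ :=
  pos (finProdFinEquiv.symm q).1 +
    jump (finProdFinEquiv.symm q).1 (finProdFinEquiv.symm q).2

/-- Parent edge of the `i`-th retained particle. -/
def par (N : ℕ) (pos : Fin N → ℝ) (jump : Fin N → Fin 2 → ℝ) (i : Fin N) : Fin N × Fin 2 :=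
  finProdFinEquiv.symm (Tuple.sort (cval N pos jump) ⟨N + i, by omega⟩)

lemma par_inj (N : ℕ) (pos : Fin N → ℝ) (jump : Fin N → Fin 2 → ℝ) :
    Function.Injective (par N pos jump) := by
  intro i j h
  unfold par at h
  have := (Tuple.sort (cval N pos jump)).injective (finProdFinEquiv.symm.injective h)
  simp only [Fin.mk.injEq] at this
  ext; omega

lemma brwStep_eq (N : ℕ) (pos : Fin N → ℝ) (jump : Fin N → Fin 2 → ℝ) (i : Fin N) :
    brwStep N pos jump i =
      pos (par N pos jump i).1 + jump (par N pos jump i).1 (par N pos jump i).2 := by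
  have key : (((Finset.univ : Finset (Fin N × Fin 2)).val.map
      fun p => pos p.1 + jump p.1 p.2).sort (· ≤ ·)) =
      List.ofFn (cval N pos jump ∘ Tuple.sort (cval N pos jump)) := by
    have hs : (List.ofFn (cval N pos jump ∘ Tuple.sort (cval N pos jump))).Pairwise (· ≤ ·) := by
      have := (Tuple.monotone_sort (cval N pos jump)).sortedLE_ofFn
      exact this.pairwise
    refine List.Perm.eq_of_pairwise' (r := (· ≤ ·)) (Multiset.pairwise_sort _ _) hs ?_
    rw [← Multiset.coe_eq_coe, Multiset.sort_eq]
    have h1 : (List.ofFn (cval N pos jump ∘ Tuple.sort (cval N pos jump))).Perm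
        (List.ofFn (cval N pos jump)) := by
      exact Equiv.Perm.ofFn_comp_perm _ _
    rw [Multiset.coe_eq_coe.2 h1, List.ofFn_eq_map, ← Multiset.map_coe]
    have h2 : ((List.finRange (N*2) : List (Fin (N*2))) : Multiset (Fin (N*2))) =
      (Finset.univ : Finset (Fin (N*2))).val := rfl
    rw [h2]
    have h3 : (Finset.univ : Finset (Fin (N*2))).val =
      (Finset.univ : Finset (Fin N × Fin 2)).val.map finProdFinEquiv := by
      have := Finset.map_univ_equiv (finProdFinEquiv (m := N) (n := 2))
      rw [← this]; rfl
    rw [h3, Multiset.map_map]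
    refine Multiset.map_congr rfl ?_
    intro p _
    simp [cval]
  unfold brwStep
  rw [key, List.getD_eq_getElem _ _ (by simp; omega)]
  simp [par, cval]

lemma brwMax_ge (N : ℕ) (Y : ℕ → Fin N → Fin 2 → ℝ) (n : ℕ) (i : Fin N) :
    brw N (fun _ => 0) Y n i ≤ brwMax N Y n :=
  le_ciSup (f := fun i => brw N (fun _ => 0) Y n i) (Set.finite_range _).bddAbove i

lemma theta_ge (N m : ℕ) (Y : ℕ → Fin N → Fin 2 → ℝ) (n k : ℕ) (hk : k ≤ n) :
    brwMax N Y k - dsp N m Y k ≤ theta N m Y n := by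
  unfold theta
  exact Finset.le_sup' (fun k => brwMax N Y k - dsp N m Y k) (Finset.mem_range.2 (by omega))

lemma theta_succ (N m : ℕ) (Y : ℕ → Fin N → Fin 2 → ℝ) (n : ℕ) :
    theta N m Y (n + 1) ≤ max (theta N m Y n) (brwMax N Y (n + 1) - dsp N m Y (n + 1)) := by
  conv_lhs => unfold theta
  refine Finset.sup'_le _ _ ?_
  intro k hk
  rw [Finset.mem_range] at hk
  rcases Nat.lt_or_ge k (n + 1) with h | h
  · exact le_max_of_le_left (theta_ge N m Y n k (by omega))
  · have : k = n + 1 := by omega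
    subst this
    exact le_max_right _ _

lemma det (N m : ℕ) (hN : 0 < N) (Y : ℕ → Fin N → Fin 2 → ℝ) (n : ℕ) (x : ℝ) (hx : 0 ≤ x)
    (h : x < theta N m Y (n + 1) - theta N m Y n) :
    ∃ i : Fin N, ∃ b : Fin 2, x < brw N (fun _ => 0) Y n i - brwMax N Y (n - m) ∧
      x < Y n i b := by
  have : Nonempty (Fin N) := ⟨⟨0, hN⟩⟩
  have h1 : theta N m Y n + x < brwMax N Y (n + 1) - dsp N m Y (n + 1) := by
    rcases le_max_iff.1 (theta_succ N m Y n) with h2 | h2 <;> linarith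
  obtain ⟨i, hi⟩ := exists_eq_ciSup_of_finite (f := fun i => brw N (fun _ => 0) Y (n + 1) i)
  have hi' : brwMax N Y (n + 1) = brwStep N (brw N (fun _ => 0) Y n) (Y n) i := hi.symm
  rw [brwStep_eq] at hi'
  set p := par N (brw N (fun _ => 0) Y n) (Y n) i
  have h3 : dsp N m Y (n + 1) =
    max (dsp N m Y n) (dsp N m Y (n - m) + ⨆ p : Fin N × Fin 2, Y n p.1 p.2) := by
    rw [dsp]
  have h4 : Y n p.1 p.2 ≤ ⨆ p : Fin N × Fin 2, Y n p.1 p.2 :=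
    le_ciSup (f := fun p : Fin N × Fin 2 => Y n p.1 p.2) (Set.finite_range _).bddAbove p
  have h5 := le_max_left (dsp N m Y n) (dsp N m Y (n - m) + ⨆ p : Fin N × Fin 2, Y n p.1 p.2)
  have h6 := le_max_right (dsp N m Y n) (dsp N m Y (n - m) + ⨆ p : Fin N × Fin 2, Y n p.1 p.2)
  have h7 := theta_ge N m Y n n le_rfl
  have h8 := theta_ge N m Y n (n - m) (Nat.sub_le _ _)
  have h9 := brwMax_ge N Y n p.1
  refine ⟨p.1, p.2, ?_, ?_⟩ <;> linarith

/-- The weights along the genealogy, started at time `s`. -/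
def gw (N : ℕ) (W V : ℝ → ENNReal) (Y ξ : ℕ → Fin N → Fin 2 → ℝ) (s : ℕ) :
    ℕ → Fin N → ENNReal
  | 0 => fun _ => 1
  | r + 1 => fun i =>
      let p := par N (brw N (fun _ => 0) Y (s + r)) (Y (s + r)) i
      gw N W V Y ξ s r p.1 * W (ξ (s + r) p.1 p.2) + V (ξ (s + r) p.1 p.2)

lemma gw_sum (N : ℕ) (W V : ℝ → ENNReal) (Y ξ : ℕ → Fin N → Fin 2 → ℝ) (s r : ℕ) :
    ∑ i, gw N W V Y ξ s (r + 1) i ≤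
      ∑ p : Fin N × Fin 2, (gw N W V Y ξ s r p.1 * W (ξ (s + r) p.1 p.2) +
        V (ξ (s + r) p.1 p.2)) := by
  have hinj := par_inj N (brw N (fun _ => 0) Y (s + r)) (Y (s + r))
  calc ∑ i, gw N W V Y ξ s (r + 1) i
      = ∑ p ∈ Finset.univ.map ⟨_, hinj⟩, (gw N W V Y ξ s r p.1 * W (ξ (s + r) p.1 p.2) +
        V (ξ (s + r) p.1 p.2)) := by
        rw [Finset.sum_map]; rfl
    _ ≤ _ := Finset.sum_le_sum_of_subset (Finset.subset_univ _)

/-- multiplicative weight -/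
def Wf (l u : ℝ) (y : ℝ) : ENNReal := if y ≤ u then ENNReal.ofReal (Real.exp (l * y)) else 1
/-- additive weight -/
def Vf (l u z : ℝ) (y : ℝ) : ENNReal := if y ≤ u then 0 else ENNReal.ofReal (Real.exp (l * z))

lemma gw_lower (N : ℕ) (l u c x : ℝ) (hl : 0 ≤ l) (hc : 0 < c) (ξ : ℕ → Fin N → Fin 2 → ℝ)
    (hξ : ∀ n i b, 0 ≤ ξ n i b) (s r : ℕ) (i : Fin N) :
    min (ENNReal.ofReal (Real.exp (l * (c * x))))
      (ENNReal.ofReal (Real.exp (l * (c * (brw N (fun _ => 0) (fun k i j => ξ k i j / c) (s + r) i -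
        brwMax N (fun k i j => ξ k i j / c) s))))) ≤
    gw N (Wf l u) (Vf l u (c * x)) (fun k i j => ξ k i j / c) ξ s r i := by
  induction r generalizing i with
  | zero =>
    refine min_le_of_right_le ?_
    simp only [gw, Nat.add_zero]
    rw [ENNReal.ofReal_le_one, Real.exp_le_one_iff]
    have := brwMax_ge N (fun k i j => ξ k i j / c) s i
    exact mul_nonpos_of_nonneg_of_nonpos hl
      (mul_nonpos_of_nonneg_of_nonpos hc.le (by linarith))
  | succ r ih =>
    have e : brw N (fun _ => 0) (fun k i j => ξ k i j / c) (s + (r + 1)) i =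
      brwStep N (brw N (fun _ => 0) (fun k i j => ξ k i j / c) (s + r))
        ((fun k i j => ξ k i j / c) (s + r)) i := rfl
    rw [e, brwStep_eq]
    simp only [gw]
    set p := par N (brw N (fun _ => 0) (fun k i j => ξ k i j / c) (s + r))
        (fun i j => ξ (s + r) i j / c) i with hp
    have ihp := ih p.1
    set y := ξ (s + r) p.1 p.2 with hy
    have hy0 : 0 ≤ y := hξ _ _ _
    by_cases hyu : y ≤ u
    · simp only [Wf, Vf, if_pos hyu, add_zero]
      refine le_trans ?_ (mul_le_mul_left ihp _)
      rw [min_mul_of_nonneg _ _ zero_le]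
      rw [← ENNReal.ofReal_mul (Real.exp_nonneg _), ← ENNReal.ofReal_mul (Real.exp_nonneg _),
        ← Real.exp_add, ← Real.exp_add]
      refine min_le_min ?_ ?_
      · apply ENNReal.ofReal_le_ofReal
        apply Real.exp_le_exp.2
        have := mul_nonneg hl hy0
        linarith
      · apply ENNReal.ofReal_le_ofReal
        apply Real.exp_le_exp.2
        apply le_of_eq
        field_simp
        ring
    · simp only [Wf, Vf, if_neg hyu]
      exact le_trans (min_le_left _ _) le_add_self

section prob

variable {Ω : Type*} [MeasurableSpace Ω]

lemma brwFilt_le {N : ℕ} {ξ : ℕ → Fin N → Fin 2 → Ω → ℝ} (hm : ∀ n i j, Measurable (ξ n i j))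
    (n : ℕ) : brwFilt N ξ n ≤ (inferInstance : MeasurableSpace Ω) := by
  unfold brwFilt
  refine iSup_le fun k => iSup_le fun _ => iSup_le fun i => iSup_le fun j => ?_
  exact (hm k i j).comap_le

lemma brwFilt_mono {N : ℕ} (ξ : ℕ → Fin N → Fin 2 → Ω → ℝ) {n n' : ℕ} (h : n ≤ n') :
    brwFilt N ξ n ≤ brwFilt N ξ n' := by
  unfold brwFilt
  refine iSup_le fun k => iSup_le fun hk => iSup_le fun i => iSup_le fun j => ?_
  exact le_iSup_of_le k (le_iSup_of_le (by omega) (le_iSup_of_le i (le_iSup_of_le j le_rfl)))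

lemma meas_xi {N : ℕ} (ξ : ℕ → Fin N → Fin 2 → Ω → ℝ) {k n : ℕ} (h : k < n) (i : Fin N)
    (j : Fin 2) : Measurable[brwFilt N ξ n] (ξ k i j) := by
  apply Measurable.of_comap_le
  unfold brwFilt
  exact le_iSup_of_le k (le_iSup_of_le h (le_iSup_of_le i (le_iSup_of_le j le_rfl)))

lemma indep_xi {P : Measure Ω} [IsProbabilityMeasure P] {N : ℕ} {ξ : ℕ → Fin N → Fin 2 → Ω → ℝ}
    (hm : ∀ n i j, Measurable (ξ n i j))
    (hind : iIndepFun (fun p : ℕ × Fin N × Fin 2 => ξ p.1 p.2.1 p.2.2) P)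
    (n : ℕ) (i : Fin N) (j : Fin 2) :
    Indep (brwFilt N ξ n) (MeasurableSpace.comap (ξ n i j) inferInstance) P := by
  have h := indep_iSup_of_disjoint
    (m := fun p : ℕ × Fin N × Fin 2 => MeasurableSpace.comap (ξ p.1 p.2.1 p.2.2) inferInstance)
    (S := {p | p.1 < n}) (T := {(n, i, j)}) (μ := P)
    (fun p => (hm _ _ _).comap_le) hind (by simp)
  refine indep_of_indep_of_le_left (indep_of_indep_of_le_right h ?_) ?_
  · exact le_iSup_of_le (n, i, j) (le_iSup_of_le rfl le_rfl)
  · unfold brwFilt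
    refine iSup_le fun k => iSup_le fun hk => iSup_le fun i => iSup_le fun j => ?_
    exact le_iSup_of_le (k, i, j) (le_iSup_of_le hk le_rfl)

lemma meas_select {ι β : Type*} [Fintype ι] [MeasurableSpace ι] [MeasurableSingletonClass ι]
    [MeasurableSpace β]
    {Ω' : Type*} {m : MeasurableSpace Ω'} {τ : Ω' → ι} (hτ : Measurable τ) {G : ι → Ω' → β}
    (hG : ∀ p, Measurable (G p)) : Measurable (fun ω => G (τ ω) ω) := by
  have h : Measurable (fun q : ι × Ω' => G q.1 q.2) := measurable_from_prod_countable_right hG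
  exact h.comp (hτ.prodMk measurable_id)

lemma meas_sort {Ω' : Type*} {m : MeasurableSpace Ω'} {n : ℕ} {v : Ω' → Fin n → ℝ}
    (hv : ∀ i, Measurable (fun ω => v ω i)) (σ : Equiv.Perm (Fin n)) :
    MeasurableSet {ω | Tuple.sort (v ω) = σ} := by
  have : {ω | Tuple.sort (v ω) = σ} =
    (⋂ i : Fin n, ⋂ j : Fin n, ⋂ (_ : i ≤ j), {ω | v ω (σ i) ≤ v ω (σ j)}) ∩
    (⋂ i : Fin n, ⋂ j : Fin n, ⋂ (_ : i < j), ⋂ (_ : ¬ σ i < σ j),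
      {ω | v ω (σ i) = v ω (σ j)}ᶜ) := by
    ext ω
    simp only [mem_ofPred_eq, mem_inter_iff, mem_iInter, mem_compl_iff]
    rw [eq_comm, Tuple.eq_sort_iff]
    constructor
    · rintro ⟨h1, h2⟩
      exact ⟨fun i j hij => h1 hij, fun i j hij hn he => hn (h2 i j hij he)⟩
    · rintro ⟨h1, h2⟩
      exact ⟨fun i j hij => h1 i j hij, fun i j hij he => by
        by_contra hn; exact h2 i j hij hn he⟩
  rw [this]
  refine MeasurableSet.inter ?_ ?_
  · exact MeasurableSet.iInter fun i => MeasurableSet.iInter fun j => MeasurableSet.iInter fun _ =>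
      measurableSet_le (hv _) (hv _)
  · exact MeasurableSet.iInter fun i => MeasurableSet.iInter fun j => MeasurableSet.iInter fun _ =>
      MeasurableSet.iInter fun _ => (measurableSet_eq_fun (hv _) (hv _)).compl

lemma meas_par_aux {Ω' : Type*} {m : MeasurableSpace Ω'} {N : ℕ} {pos : Ω' → Fin N → ℝ}
    {jump : Ω' → Fin N → Fin 2 → ℝ}
    (hp : ∀ i, Measurable (fun ω => pos ω i)) (hj : ∀ i b, Measurable (fun ω => jump ω i b))
    (i : Fin N) : Measurable (fun ω => par N (pos ω) (jump ω) i) := by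
  have hv : ∀ q, Measurable (fun ω => cval N (pos ω) (jump ω) q) := by
    intro q
    unfold cval
    exact (hp _).add (hj _ _)
  let _ : MeasurableSpace (Equiv.Perm (Fin (N * 2))) := ⊤
  have h1 : Measurable (fun ω => Tuple.sort (cval N (pos ω) (jump ω))) := by
    refine measurable_to_countable' fun σ => ?_
    exact meas_sort hv σ
  unfold par
  exact (measurable_from_top (f := fun σ : Equiv.Perm (Fin (N * 2)) =>
    finProdFinEquiv.symm (σ ⟨N + i, by omega⟩))).comp h1

lemma meas_brw {N : ℕ} (ξ : ℕ → Fin N → Fin 2 → Ω → ℝ) (c : ℝ) (n : ℕ) (i : Fin N) :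
    Measurable[brwFilt N ξ n]
      (fun ω => brw N (fun _ => 0) (fun k i j => ξ k i j ω / c) n i) := by
  induction n generalizing i with
  | zero => exact measurable_const
  | succ n ih =>
    have ih' : ∀ i, Measurable[brwFilt N ξ (n + 1)]
      (fun ω => brw N (fun _ => 0) (fun k i j => ξ k i j ω / c) n i) := fun i =>
        (ih i).mono (brwFilt_mono ξ (Nat.le_succ n)) le_rfl
    have hj : ∀ i b, Measurable[brwFilt N ξ (n + 1)] (fun ω => ξ n i b ω / c) := fun i b =>
      (meas_xi ξ (Nat.lt_succ_self n) i b).div_const c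
    have e : (fun ω => brw N (fun _ => 0) (fun k i j => ξ k i j ω / c) (n + 1) i) =
      fun ω => (fun (p : Fin N × Fin 2) ω' =>
        brw N (fun _ => 0) (fun k i j => ξ k i j ω' / c) n p.1 + ξ n p.1 p.2 ω' / c)
        (par N (brw N (fun _ => 0) (fun k i j => ξ k i j ω / c) n)
          (fun i j => ξ n i j ω / c) i) ω := by
      funext ω
      exact brwStep_eq N _ _ i
    rw [e]
    exact meas_select (m := brwFilt N ξ (n + 1)) (meas_par_aux ih' hj i)
      (fun p => (ih' p.1).add (hj p.1 p.2))

lemma meas_gw {N : ℕ} (ξ : ℕ → Fin N → Fin 2 → Ω → ℝ) (c : ℝ) {W V : ℝ → ENNReal}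
    (hW : Measurable W) (hV : Measurable V) (s r : ℕ) (i : Fin N) :
    Measurable[brwFilt N ξ (s + r)]
      (fun ω => gw N W V (fun k i j => ξ k i j ω / c) (fun k i j => ξ k i j ω) s r i) := by
  induction r generalizing i with
  | zero => exact measurable_const
  | succ r ih =>
    have ih' : ∀ i, Measurable[brwFilt N ξ (s + (r + 1))]
      (fun ω => gw N W V (fun k i j => ξ k i j ω / c) (fun k i j => ξ k i j ω) s r i) := fun i =>
        (ih i).mono (brwFilt_mono ξ (by omega)) le_rfl
    have hb : ∀ i, Measurable[brwFilt N ξ (s + (r + 1))]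
      (fun ω => brw N (fun _ => 0) (fun k i j => ξ k i j ω / c) (s + r) i) := fun i =>
        (meas_brw ξ c (s + r) i).mono (brwFilt_mono ξ (by omega)) le_rfl
    have hx : ∀ i b, Measurable[brwFilt N ξ (s + (r + 1))] (ξ (s + r) i b) := fun i b =>
      meas_xi ξ (by omega) i b
    have hj : ∀ i b, Measurable[brwFilt N ξ (s + (r + 1))] (fun ω => ξ (s + r) i b ω / c) :=
      fun i b => (hx i b).div_const c
    exact meas_select (m := brwFilt N ξ (s + (r + 1)))
      (G := fun (p : Fin N × Fin 2) ω' =>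
        gw N W V (fun k i j => ξ k i j ω' / c) (fun k i j => ξ k i j ω') s r p.1 *
          W (ξ (s + r) p.1 p.2 ω') + V (ξ (s + r) p.1 p.2 ω'))
      (meas_par_aux hb hj i)
      (fun p => ((ih' p.1).mul (hW.comp (hx p.1 p.2))).add (hV.comp (hx p.1 p.2)))

lemma ind_one_meas {Ω' : Type*} (m : MeasurableSpace Ω') (A : Set Ω') (hA : MeasurableSet A) :
    Measurable (A.indicator (1 : Ω' → ENNReal)) := measurable_one.indicator hA

lemma gw_lint {P : Measure Ω} [IsProbabilityMeasure P] {N : ℕ}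
    {ξ : ℕ → Fin N → Fin 2 → Ω → ℝ} (hm : ∀ n i j, Measurable (ξ n i j))
    (hind : iIndepFun (fun p : ℕ × Fin N × Fin 2 => ξ p.1 p.2.1 p.2.2) P)
    {μ : Measure ℝ} (hd : ∀ n i j, Measure.map (ξ n i j) P = μ) (c : ℝ) {W V : ℝ → ENNReal}
    (hW : Measurable W) (hV : Measurable V) (hW1 : 1 ≤ ∫⁻ y, W y ∂μ) (s r : ℕ) (A : Set Ω)
    (hA : MeasurableSet[brwFilt N ξ s] A) :
    (∫⁻ ω, A.indicator 1 ω *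
      ∑ i, gw N W V (fun k i j => ξ k i j ω / c) (fun k i j => ξ k i j ω) s r i ∂P)
      + 2 * N * (∫⁻ y, V y ∂μ) * P A ≤
    N * (2 * ∫⁻ y, W y ∂μ) ^ r * (1 + 2 * ∫⁻ y, V y ∂μ) * P A := by
  have hA' : MeasurableSet A := brwFilt_le hm s A hA
  have hAm : ∀ r, Measurable[brwFilt N ξ (s + r)] (A.indicator (1 : Ω → ENNReal)) := fun r =>
    ind_one_meas (brwFilt N ξ (s + r)) A (brwFilt_mono ξ (Nat.le_add_right s r) A hA)
  induction r with
  | zero =>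
    simp only [gw, Finset.sum_const, Finset.card_univ, Fintype.card_fin, nsmul_eq_mul, mul_one,
      pow_zero]
    rw [lintegral_mul_const _ (measurable_one.indicator hA'), lintegral_indicator_one hA']
    apply le_of_eq; ring
  | succ r ih =>
    set M := ∫⁻ y, W y ∂μ
    set v := ∫⁻ y, V y ∂μ
    set g : ℕ → Fin N → Ω → ENNReal := fun r i ω =>
      gw N W V (fun k i j => ξ k i j ω / c) (fun k i j => ξ k i j ω) s r i with hg
    have hgm : ∀ r i, Measurable[brwFilt N ξ (s + r)] (g r i) := fun r i => meas_gw ξ c hW hV s r i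
    have hgm' : ∀ r i, Measurable (g r i) := fun r i => (hgm r i).mono (brwFilt_le hm _) le_rfl
    have hi1 : Measurable (A.indicator (1 : Ω → ENNReal)) := measurable_one.indicator hA'
    have ind : ∀ (p : Fin N × Fin 2) (f : Ω → ENNReal) (φ : ℝ → ENNReal),
      Measurable[brwFilt N ξ (s + r)] f → Measurable φ →
      ∫⁻ ω, f ω * φ (ξ (s + r) p.1 p.2 ω) ∂P = (∫⁻ ω, f ω ∂P) * ∫⁻ y, φ y ∂μ := by
      intro p f φ hf hφ
      rw [← hd (s + r) p.1 p.2, lintegral_map hφ (hm _ _ _)]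
      exact lintegral_mul_eq_lintegral_mul_lintegral_of_independent_measurableSpace
        (brwFilt_le hm _) (hm _ _ _).comap_le (indep_xi hm hind (s + r) p.1 p.2) hf
        (hφ.comp (comap_measurable _))
    have step : ∫⁻ ω, A.indicator 1 ω * ∑ i, g (r + 1) i ω ∂P ≤
        2 * M * (∫⁻ ω, A.indicator 1 ω * ∑ i, g r i ω ∂P) + 2 * N * v * P A := by
      calc ∫⁻ ω, A.indicator 1 ω * ∑ i, g (r + 1) i ω ∂P
          ≤ ∫⁻ ω, ∑ p : Fin N × Fin 2, ((A.indicator 1 ω * g r p.1 ω) * W (ξ (s + r) p.1 p.2 ω) +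
              A.indicator 1 ω * V (ξ (s + r) p.1 p.2 ω)) ∂P := by
            refine lintegral_mono fun ω => ?_
            have := gw_sum N W V (fun k i j => ξ k i j ω / c) (fun k i j => ξ k i j ω) s r
            refine (mul_le_mul_right this _).trans (le_of_eq ?_)
            rw [Finset.mul_sum]
            refine Finset.sum_congr rfl fun p _ => ?_
            simp only [hg]
            ring
        _ = ∑ p : Fin N × Fin 2, ((∫⁻ ω, A.indicator 1 ω * g r p.1 ω ∂P) * M + P A * v) := by
            rw [lintegral_finsetSum]
            · refine Finset.sum_congr rfl fun p _ => ?_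
              rw [lintegral_add_left, ind p (fun ω => A.indicator 1 ω * g r p.1 ω) W ((hAm r).mul (hgm r p.1)) hW,
                ind p _ V (hAm r) hV, lintegral_indicator_one hA']
              exact (hi1.mul (hgm' r p.1)).mul (hW.comp (hm _ _ _))
            · intro p _
              exact ((hi1.mul (hgm' r p.1)).mul (hW.comp (hm _ _ _))).add
                (hi1.mul (hV.comp (hm _ _ _)))
        _ = _ := by
            simp_rw [Finset.mul_sum]
            rw [lintegral_finsetSum (f := fun i ω => A.indicator 1 ω * g r i ω) _
              (fun i _ => hi1.mul (hgm' r i))]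
            rw [Fintype.sum_prod_type]
            simp only [Finset.sum_const, Finset.card_univ, Fintype.card_fin, nsmul_eq_mul]
            rw [← Finset.mul_sum, Finset.sum_add_distrib, ← Finset.sum_mul]
            simp only [Finset.sum_const, Finset.card_univ, Fintype.card_fin, nsmul_eq_mul]
            push_cast
            ring
    calc _ ≤ (2 * M * (∫⁻ ω, A.indicator 1 ω * ∑ i, g r i ω ∂P) + 2 * N * v * P A)
          + 2 * N * v * P A := by gcongr
      _ ≤ (2 * M * (∫⁻ ω, A.indicator 1 ω * ∑ i, g r i ω ∂P) + 2 * M * (2 * N * v * P A)) := by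
          rw [add_assoc]
          gcongr
          calc _ = 2 * 1 * (2 * N * v * P A) := by ring
            _ ≤ _ := by gcongr
      _ = 2 * M * ((∫⁻ ω, A.indicator 1 ω * ∑ i, g r i ω ∂P) + 2 * N * v * P A) := by ring
      _ ≤ 2 * M * (N * (2 * M) ^ r * (1 + 2 * v) * P A) := by gcongr
      _ = _ := by ring


lemma Wf_meas (l u : ℝ) : Measurable (Wf l u) := by
  unfold Wf
  exact Measurable.ite measurableSet_Iic (by fun_prop) measurable_const

lemma Vf_meas (l u z : ℝ) : Measurable (Vf l u z) := by
  unfold Vf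
  exact Measurable.ite measurableSet_Iic measurable_const measurable_const

lemma Vf_lint (μ : Measure ℝ) (l u z : ℝ) :
    ∫⁻ y, Vf l u z y ∂μ = ENNReal.ofReal (Real.exp (l * z)) * μ (Ioi u) := by
  have : Vf l u z = (Ioi u).indicator (fun _ => ENNReal.ofReal (Real.exp (l * z))) := by
    funext y
    by_cases h : y ≤ u
    · simp [Vf, h, Set.indicator]
    · simp [Vf, h, Set.indicator]
  rw [this, lintegral_indicator_const measurableSet_Ioi]

/-- The dominating event. -/
def Uset (N : ℕ) (ξ : ℕ → Fin N → Fin 2 → Ω → ℝ) (c x : ℝ) (s n : ℕ) (i : Fin N) : Set Ω :=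
  {ω | x < brw N (fun _ => 0) (fun k i j => ξ k i j ω / c) n i -
    brwMax N (fun k i j => ξ k i j ω / c) s}

lemma aux_iSup {Ω' : Type*} (m : MeasurableSpace Ω') {N : ℕ} (f : Fin N → Ω' → ℝ)
    (hf : ∀ i, Measurable (f i)) : Measurable (fun ω => ⨆ i, f i ω) := Measurable.iSup hf

lemma aux_lt {Ω' : Type*} (m : MeasurableSpace Ω') (f : Ω' → ℝ) (x : ℝ)
    (hf : Measurable f) : MeasurableSet {ω | x < f ω} := measurableSet_lt measurable_const hf

lemma Uset_meas {N : ℕ} (ξ : ℕ → Fin N → Fin 2 → Ω → ℝ) (c x : ℝ) {s n : ℕ} (hs : s ≤ n)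
    (i : Fin N) : MeasurableSet[brwFilt N ξ n] (Uset N ξ c x s n i) := by
  have h1 := meas_brw ξ c n i
  have h2 : Measurable[brwFilt N ξ n] (fun ω => brwMax N (fun k i j => ξ k i j ω / c) s) := by
    unfold brwMax
    exact aux_iSup (brwFilt N ξ n) _ (fun i =>
      (meas_brw ξ c s i).mono (brwFilt_mono ξ hs) le_rfl)
  exact aux_lt (brwFilt N ξ n) _ x (h1.sub h2)

lemma prob_bound {P : Measure Ω} [IsProbabilityMeasure P] {N : ℕ}
    {ξ : ℕ → Fin N → Fin 2 → Ω → ℝ} (hm : ∀ n i j, Measurable (ξ n i j))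
    (hpos : ∀ n i j ω, 0 ≤ ξ n i j ω)
    (hind : iIndepFun (fun p : ℕ × Fin N × Fin 2 => ξ p.1 p.2.1 p.2.2) P)
    {μ : Measure ℝ} (hd : ∀ n i j, Measure.map (ξ n i j) P = μ) (c x l u : ℝ) (hc : 0 < c)
    (hl : 0 ≤ l)
    (hW1 : 1 ≤ ∫⁻ y, Wf l u y ∂μ) (s r : ℕ) (A : Set Ω)
    (hA : MeasurableSet[brwFilt N ξ s] A) :
    P (A ∩ ⋃ p : Fin N × Fin 2, (Uset N ξ c x s (s + r) p.1 ∩ {ω | x < ξ (s + r) p.1 p.2 ω / c})) ≤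
      2 * μ (Ioi (c * x)) * (N * (2 * ∫⁻ y, Wf l u y ∂μ) ^ r *
        (ENNReal.ofReal (Real.exp (-(l * (c * x)))) + 2 * μ (Ioi u)) * P A) := by
  have hA' : MeasurableSet A := brwFilt_le hm s A hA
  have hUn : ∀ i, MeasurableSet[brwFilt N ξ (s + r)] (Uset N ξ c x s (s + r) i) := fun i =>
    Uset_meas ξ c x (Nat.le_add_right s r) i
  have hU : ∀ i, MeasurableSet (Uset N ξ c x s (s + r) i) := fun i => brwFilt_le hm _ _ (hUn i)
  have hp : ∀ p : Fin N × Fin 2,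
      P (A ∩ (Uset N ξ c x s (s + r) p.1 ∩ {ω | x < ξ (s + r) p.1 p.2 ω / c})) =
      P (A ∩ Uset N ξ c x s (s + r) p.1) * μ (Ioi (c * x)) := by
    intro p
    have e : {ω | x < ξ (s + r) p.1 p.2 ω / c} = ξ (s + r) p.1 p.2 ⁻¹' Ioi (c * x) := by
      ext ω
      simp only [mem_ofPred_eq, mem_preimage, mem_Ioi]
      rw [lt_div_iff₀ hc, mul_comm]
    rw [e, ← inter_assoc, ← hd (s + r) p.1 p.2, Measure.map_apply (hm _ _ _) measurableSet_Ioi]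
    have hi := indep_xi hm hind (s + r) p.1 p.2
    rw [Indep_iff] at hi
    refine hi _ _ ?_ ⟨_, measurableSet_Ioi, rfl⟩
    exact MeasurableSet.inter (brwFilt_mono ξ (Nat.le_add_right s r) A hA) (hUn p.1)
  set E := ENNReal.ofReal (Real.exp (l * (c * x))) with hE
  set E' := ENNReal.ofReal (Real.exp (-(l * (c * x)))) with hE'
  have hEE : E' * E = 1 := by
    rw [hE, hE', ← ENNReal.ofReal_mul (Real.exp_nonneg _), ← Real.exp_add]
    simp
  have key : E * ∑ i, P (A ∩ Uset N ξ c x s (s + r) i) ≤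
      N * (2 * ∫⁻ y, Wf l u y ∂μ) ^ r * (1 + 2 * (E * μ (Ioi u))) * P A := by
    have h1 := gw_lint hm hind hd c (Wf_meas l u) (Vf_meas l u (c * x)) hW1 s r A hA
    rw [Vf_lint] at h1
    refine le_trans ?_ (le_trans le_self_add h1)
    have h2 : ∀ i, P (A ∩ Uset N ξ c x s (s + r) i) =
      ∫⁻ ω, (A ∩ Uset N ξ c x s (s + r) i).indicator 1 ω ∂P := fun i =>
        (lintegral_indicator_one (hA'.inter (hU i))).symm
    simp_rw [h2]
    rw [← lintegral_finsetSum _ (fun i _ => measurable_one.indicator (hA'.inter (hU i))),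
      ← lintegral_const_mul' _ _ ENNReal.ofReal_ne_top]
    refine lintegral_mono fun ω => ?_
    simp only [Finset.mul_sum]
    refine Finset.sum_le_sum fun i _ => ?_
    by_cases hω : ω ∈ A ∩ Uset N ξ c x s (s + r) i
    · rw [Set.indicator_of_mem hω, Set.indicator_of_mem hω.1]
      simp only [Pi.one_apply, mul_one, one_mul]
      refine le_trans ?_ (gw_lower N l u c x hl hc (fun k i j => ξ k i j ω)
        (fun n i b => hpos n i b ω) s r i)
      refine le_min le_rfl ?_
      apply ENNReal.ofReal_le_ofReal
      apply Real.exp_le_exp.2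
      have : x < _ := hω.2
      gcongr
    · rw [Set.indicator_of_notMem hω]; simp
  rw [inter_iUnion]
  calc _ ≤ ∑ p : Fin N × Fin 2,
        P (A ∩ (Uset N ξ c x s (s + r) p.1 ∩ {ω | x < ξ (s + r) p.1 p.2 ω / c})) :=
        measure_iUnion_fintype_le _ _
    _ = 2 * μ (Ioi (c * x)) * ∑ i, P (A ∩ Uset N ξ c x s (s + r) i) := by
        simp_rw [hp]
        rw [Fintype.sum_prod_type]
        simp only [Finset.sum_const, Finset.card_univ, Fintype.card_fin, nsmul_eq_mul]
        rw [Finset.mul_sum]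
        refine Finset.sum_congr rfl fun i _ => ?_
        push_cast
        ring
    _ = 2 * μ (Ioi (c * x)) * (E' * (E * ∑ i, P (A ∩ Uset N ξ c x s (s + r) i))) := by
        rw [← mul_assoc E', hEE, one_mul]
    _ ≤ 2 * μ (Ioi (c * x)) * (E' * (N * (2 * ∫⁻ y, Wf l u y ∂μ) ^ r *
          (1 + 2 * (E * μ (Ioi u))) * P A)) := by gcongr
    _ = 2 * μ (Ioi (c * x)) * (N * (2 * ∫⁻ y, Wf l u y ∂μ) ^ r *
          (E' + 2 * ((E' * E) * μ (Ioi u))) * P A) := by ring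
    _ = _ := by rw [hEE, one_mul]

lemma condexp_bound {Ω' : Type*} {m0 mΩ : MeasurableSpace Ω'} {P : Measure Ω'}
    [IsProbabilityMeasure P] (hm0 : m0 ≤ mΩ) (S U : Set Ω') (hSU : S ⊆ U)
    (hU : MeasurableSet U) (C : ℝ) (hC : 0 ≤ C)
    (h : ∀ A, MeasurableSet[m0] A → P (A ∩ U) ≤ ENNReal.ofReal C * P A) :
    ∀ᵐ ω ∂P, (P[S.indicator (fun _ => (1 : ℝ)) | m0]) ω ≤ C := by
  by_cases hS : Integrable (S.indicator (fun _ => (1 : ℝ))) P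
  swap
  · rw [condExp_of_not_integrable hS]
    exact Filter.Eventually.of_forall fun _ => hC
  have hUi : Integrable (U.indicator (fun _ => (1 : ℝ))) P :=
    (integrable_const 1).indicator hU
  have h1 : P[S.indicator (fun _ => (1 : ℝ)) | m0] ≤ᵐ[P] P[U.indicator (fun _ => (1 : ℝ)) | m0] :=
    condExp_mono hS hUi (Filter.Eventually.of_forall fun ω =>
      Set.indicator_le_indicator_of_subset hSU (fun _ => zero_le_one) ω)
  have h2 : P[U.indicator (fun _ => (1 : ℝ)) | m0] ≤ᵐ[P] fun _ => C := by
    have h3 : P[U.indicator (fun _ => (1 : ℝ)) | m0] ≤ᵐ[P.trim hm0] fun _ => C := by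
      refine ae_le_of_forall_setIntegral_le ?_ ?_ ?_
      · exact integrable_condExp.trim hm0 stronglyMeasurable_condExp
      · exact integrable_const _
      · intro A hA _
        rw [← setIntegral_trim hm0 stronglyMeasurable_condExp hA, setIntegral_condExp hm0 hUi hA,
          setIntegral_const, setIntegral_indicator hU, setIntegral_const]
        simp only [smul_eq_mul, mul_one]
        have := h A hA
        rw [measureReal_def, measureReal_def, trim_measurableSet_eq hm0 hA]
        have h4 := ENNReal.toReal_mono (by finiteness) this
        rw [ENNReal.toReal_mul, ENNReal.toReal_ofReal hC] at h4
        linarith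
    exact ae_le_of_ae_le_trim h3
  filter_upwards [h1, h2] with ω a b using a.trans b

end prob

section analysis

lemma T_pos {T : ℝ → ℝ} (hT : Antitone T) (h0 : ∀ x, 0 ≤ T x) {α : ℝ}
    (hRV : ∀ l : ℝ, 0 < l → Tendsto (fun x => T x / T (l * x)) atTop (nhds (l ^ α))) (x : ℝ) :
    0 < T x := by
  have h := hRV 1 one_pos
  rw [Real.one_rpow] at h
  have h1 : ∀ᶠ y in atTop, (0 : ℝ) < T y / T (1 * y) := h.eventually (lt_mem_nhds one_pos)
  obtain ⟨y, hy, hxy⟩ := (h1.and (eventually_ge_atTop x)).exists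
  have : T y ≠ 0 := by
    intro h; simp [h] at hy
  exact lt_of_lt_of_le (lt_of_le_of_ne (h0 y) this.symm) (hT hxy)

lemma T_ratio {T : ℝ → ℝ} (hT : Antitone T) (h0 : ∀ x, 0 ≤ T x) {α : ℝ}
    (hRV : ∀ l : ℝ, 0 < l → Tendsto (fun x => T x / T (l * x)) atTop (nhds (l ^ α)))
    (l B : ℝ) (hl : 0 < l) (hB : l ^ α < B) : ∀ᶠ x in atTop, T x ≤ B * T (l * x) := by
  filter_upwards [(hRV l hl).eventually (gt_mem_nhds hB)] with x hx
  have := T_pos hT h0 hRV (l * x)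
  rw [div_lt_iff₀ this] at hx
  exact hx.le

lemma T_ratio' {T : ℝ → ℝ} (hT : Antitone T) (h0 : ∀ x, 0 ≤ T x) {α : ℝ}
    (hRV : ∀ l : ℝ, 0 < l → Tendsto (fun x => T x / T (l * x)) atTop (nhds (l ^ α)))
    (l B : ℝ) (hl : 0 < l) (hB : B < l ^ α) : ∀ᶠ x in atTop, B * T (l * x) ≤ T x := by
  filter_upwards [(hRV l hl).eventually (lt_mem_nhds hB)] with x hx
  have := T_pos hT h0 hRV (l * x)
  rw [lt_div_iff₀ this] at hx
  exact hx.le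

lemma T_lower {T : ℝ → ℝ} (hT : Antitone T) (h0 : ∀ x, 0 ≤ T x) {α : ℝ} (hα : 0 < α)
    (hRV : ∀ l : ℝ, 0 < l → Tendsto (fun x => T x / T (l * x)) atTop (nhds (l ^ α))) :
    ∀ᶠ x in atTop, x ^ (-(α + 2)) ≤ T x := by
  have h1 := T_ratio hT h0 hRV 2 (2 ^ (α + 1)) two_pos
    (Real.rpow_lt_rpow_of_exponent_lt (by norm_num) (by linarith))
  obtain ⟨x0, hx0⟩ := (h1.and (eventually_ge_atTop (1 : ℝ))).exists_forall_of_atTop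
  have hx01 : 1 ≤ x0 := (hx0 x0 le_rfl).2
  have hk : ∀ k : ℕ, T x0 ≤ ((2 : ℝ) ^ k) ^ (α + 1) * T (2 ^ k * x0) := by
    intro k
    induction k with
    | zero => simp
    | succ k ih =>
      have h2 : x0 ≤ 2 ^ k * x0 := le_mul_of_one_le_left (by linarith) (one_le_pow₀ (by norm_num))
      have h3 := (hx0 _ h2).1
      refine ih.trans ?_
      calc _ ≤ ((2 : ℝ) ^ k) ^ (α + 1) * (2 ^ (α + 1) * T (2 * (2 ^ k * x0))) := by gcongr
        _ = ((2 : ℝ) ^ k * 2) ^ (α + 1) * T (2 * (2 ^ k * x0)) := by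
          rw [Real.mul_rpow (by positivity) (by norm_num)]; ring
        _ = _ := by rw [← pow_succ]; congr 2; ring
  have hTp := T_pos hT h0 hRV x0
  filter_upwards [eventually_ge_atTop x0, eventually_ge_atTop (2 ^ (α + 1) / T x0)] with x hx hx2
  have hxp : 0 < x := by linarith
  obtain ⟨k, hk1, hk2⟩ := exists_nat_pow_near (x := x / x0) (y := 2)
    ((one_le_div (by linarith)).2 hx) (by norm_num)
  rw [div_lt_iff₀ (by linarith)] at hk2
  have h5 : T (2 ^ (k + 1) * x0) ≤ T x := hT hk2.le
  have h6 : (2 : ℝ) ^ (k + 1) ≤ 2 * x := by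
    have : x / x0 ≤ x := div_le_self hxp.le hx01
    rw [pow_succ]; linarith
  have h7 : T x0 ≤ (2 * x) ^ (α + 1) * T x := (hk (k + 1)).trans (by gcongr; exact h0 _)
  rw [Real.mul_rpow (by norm_num) hxp.le] at h7
  rw [div_le_iff₀ hTp] at hx2
  have h8 : 1 ≤ x ^ (α + 2) * T x := by
    have e : x ^ (α + 2) = x ^ (α + 1) * x := by
      rw [← Real.rpow_add_one hxp.ne']; congr 1; ring
    have hc : (0 : ℝ) < 2 ^ (α + 1) := by positivity
    rw [e]
    have h9 : (2 : ℝ) ^ (α + 1) * 1 ≤ 2 ^ (α + 1) * (x ^ (α + 1) * x * T x) := by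
      calc (2 : ℝ) ^ (α + 1) * 1 ≤ x * T x0 := by linarith
        _ ≤ x * (2 ^ (α + 1) * x ^ (α + 1) * T x) := by gcongr
        _ = _ := by ring
    exact le_of_mul_le_mul_left h9 hc
  rw [Real.rpow_neg hxp.le]
  rw [inv_le_iff_one_le_mul₀ (by positivity)]
  linarith

lemma T_upper {T : ℝ → ℝ} (hT : Antitone T) (h0 : ∀ x, 0 ≤ T x) (hT1 : ∀ x, T x ≤ 1) {α : ℝ}
    (hRV : ∀ l : ℝ, 0 < l → Tendsto (fun x => T x / T (l * x)) atTop (nhds (l ^ α)))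
    (g : ℝ) (hg0 : 0 < g) (hg : g < α) :
    ∃ C x0 : ℝ, 0 ≤ C ∧ 1 ≤ x0 ∧ ∀ x, x0 ≤ x → T x ≤ C * x ^ (-g) := by
  have h1 := T_ratio' hT h0 hRV 2 (2 ^ g) two_pos
    (Real.rpow_lt_rpow_of_exponent_lt (by norm_num) hg)
  obtain ⟨x0, hx0⟩ := (h1.and (eventually_ge_atTop (1 : ℝ))).exists_forall_of_atTop
  have hx01 : 1 ≤ x0 := (hx0 x0 le_rfl).2
  have hk : ∀ k : ℕ, ((2 : ℝ) ^ k) ^ g * T (2 ^ k * x0) ≤ 1 := by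
    intro k
    induction k with
    | zero => simpa using hT1 x0
    | succ k ih =>
      have h2 : x0 ≤ 2 ^ k * x0 := le_mul_of_one_le_left (by linarith) (one_le_pow₀ (by norm_num))
      have h3 := (hx0 _ h2).1
      refine le_trans ?_ ih
      calc _ = ((2 : ℝ) ^ k * 2) ^ g * T (2 * (2 ^ k * x0)) := by
            rw [← pow_succ]; congr 2; ring
        _ = ((2 : ℝ) ^ k) ^ g * (2 ^ g * T (2 * (2 ^ k * x0))) := by
          rw [Real.mul_rpow (by positivity) (by norm_num)]; ring
        _ ≤ _ := by gcongr
  refine ⟨(2 * x0) ^ g, x0, by positivity, hx01, fun x hx => ?_⟩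
  have hxp : 0 < x := by linarith
  obtain ⟨k, hk1, hk2⟩ := exists_nat_pow_near (x := x / x0) (y := 2)
    ((one_le_div (by linarith)).2 hx) (by norm_num)
  rw [le_div_iff₀ (by linarith)] at hk1
  rw [div_lt_iff₀ (by linarith)] at hk2
  have h5 : T x ≤ T (2 ^ k * x0) := hT hk1
  rw [Real.rpow_neg hxp.le, ← div_eq_mul_inv, le_div_iff₀ (by positivity)]
  calc T x * x ^ g ≤ T (2 ^ k * x0) * (2 ^ (k + 1) * x0) ^ g := by gcongr; exact h0 _
    _ = (2 * x0) ^ g * (((2 : ℝ) ^ k) ^ g * T (2 ^ k * x0)) := by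
      have : (2 : ℝ) ^ (k + 1) * x0 = 2 ^ k * (2 * x0) := by ring
      rw [this, Real.mul_rpow (by positivity) (by positivity)]; ring
    _ ≤ (2 * x0) ^ g * 1 := by gcongr; exact hk k
    _ = _ := mul_one _

lemma moment_fin {μ : Measure ℝ} [IsProbabilityMeasure μ] (hμ : ∀ᵐ y ∂μ, 0 ≤ y)
    {g g' C x0 : ℝ} (hg : 0 < g) (hgg : g < g') (hC : 0 ≤ C) (hx0 : 1 ≤ x0)
    (hT : ∀ x, x0 ≤ x → (μ (Ioi x)).toReal ≤ C * x ^ (-g')) :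
    ∫⁻ y, ENNReal.ofReal (y ^ g) ∂μ < ⊤ := by
  rw [lintegral_rpow_eq_lintegral_meas_lt_mul μ hμ aemeasurable_id hg]
  refine ENNReal.mul_lt_top ENNReal.ofReal_lt_top ?_
  have e : Ioi (0 : ℝ) = Ioc 0 x0 ∪ Ioi x0 := (Ioc_union_Ioi_eq_Ioi (by linarith)).symm
  rw [e]
  refine lt_of_le_of_lt (lintegral_union_le _ _ _) ?_
  refine ENNReal.add_lt_top.2 ⟨?_, ?_⟩
  · have hi : IntegrableOn (fun t : ℝ => t ^ (g - 1)) (Ioc 0 x0) := by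
      rw [← intervalIntegrable_iff_integrableOn_Ioc_of_le (by linarith)]
      exact intervalIntegral.intervalIntegrable_rpow' (by linarith)
    refine lt_of_le_of_lt ?_ hi.lintegral_lt_top
    refine lintegral_mono fun t => ?_
    calc _ ≤ 1 * ENNReal.ofReal (t ^ (g - 1)) := by gcongr; exact prob_le_one
      _ = _ := one_mul _
  · have hi : IntegrableOn (fun t : ℝ => C * t ^ (g - g' - 1)) (Ioi x0) :=
      (integrableOn_Ioi_rpow_of_lt (by linarith) (by linarith)).const_mul C
    refine lt_of_le_of_lt ?_ hi.lintegral_lt_top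
    refine setLIntegral_mono' measurableSet_Ioi fun t ht => ?_
    have ht : x0 < t := ht
    have htp : 0 < t := by linarith
    have h1 : μ {a | t < a} ≤ ENNReal.ofReal (C * t ^ (-g')) := by
      rw [ENNReal.le_ofReal_iff_toReal_le (measure_ne_top _ _) (by positivity)]
      exact hT t ht.le
    calc _ ≤ ENNReal.ofReal (C * t ^ (-g')) * ENNReal.ofReal (t ^ (g - 1)) := by gcongr
      _ = _ := by
        rw [← ENNReal.ofReal_mul (by positivity), mul_assoc, ← Real.rpow_add htp]
        congr 3; ring

lemma W_bound {μ : Measure ℝ} [IsProbabilityMeasure μ] (hμ : ∀ᵐ y ∂μ, 0 ≤ y)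
    {g l u : ℝ} (hg : 0 < g) (hg1 : g ≤ 1) (hl : 0 ≤ l) (hu : 0 < u) :
    ∫⁻ y, Wf l u y ∂μ ≤ 1 + ENNReal.ofReal (Real.exp (l * u) * u ^ (-g)) *
      ∫⁻ y, ENNReal.ofReal (y ^ g) ∂μ := by
  calc ∫⁻ y, Wf l u y ∂μ ≤ ∫⁻ y, (1 + ENNReal.ofReal (Real.exp (l * u) * u ^ (-g)) *
      ENNReal.ofReal (y ^ g)) ∂μ := by
        refine lintegral_mono_ae ?_
        filter_upwards [hμ] with y hy
        unfold Wf
        split_ifs with h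
        · rw [← ENNReal.ofReal_mul (by positivity), ← ENNReal.ofReal_one,
            ← ENNReal.ofReal_add (by norm_num) (by positivity)]
          apply ENNReal.ofReal_le_ofReal
          have h1 : 0 ≤ y / u := by positivity
          have h2 : y / u ≤ 1 := (div_le_one hu).2 h
          have h3 := convexOn_exp.2 (mem_univ (l * u)) (mem_univ 0) h1
            (sub_nonneg.2 h2) (by ring)
          simp only [smul_eq_mul, mul_zero, add_zero, Real.exp_zero, mul_one] at h3
          have e : y / u * (l * u) = l * y := by field_simp
          rw [e] at h3
          have h4 : y / u ≤ (y / u) ^ g := by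
            rcases eq_or_lt_of_le h1 with h5 | h5
            · rw [← h5, Real.zero_rpow hg.ne']
            · calc y / u = (y / u) ^ (1 : ℝ) := (Real.rpow_one _).symm
                _ ≤ _ := Real.rpow_le_rpow_of_exponent_ge h5 h2 hg1
          rw [Real.div_rpow hy hu.le] at h4
          rw [Real.rpow_neg hu.le]
          have h6 : y / u * Real.exp (l * u) ≤ y ^ g / u ^ g * Real.exp (l * u) := by gcongr
          have h7 : y ^ g / u ^ g * Real.exp (l * u) = Real.exp (l * u) * (u ^ g)⁻¹ * y ^ g := by
            ring
          linarith
        · exact le_self_add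
    _ = _ := by
      rw [lintegral_add_left measurable_const, lintegral_const, measure_univ, mul_one,
        lintegral_const_mul' _ _ ENNReal.ofReal_ne_top]

lemma W_ge {μ : Measure ℝ} [IsProbabilityMeasure μ] (hμ : ∀ᵐ y ∂μ, 0 ≤ y)
    {l u : ℝ} (hl : 0 ≤ l) : 1 ≤ ∫⁻ y, Wf l u y ∂μ := by
  calc (1 : ENNReal) = ∫⁻ _, 1 ∂μ := by simp
    _ ≤ _ := by
      refine lintegral_mono_ae ?_
      filter_upwards [hμ] with y hy
      unfold Wf
      split_ifs with h
      · rw [← ENNReal.ofReal_one]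
        exact ENNReal.ofReal_le_ofReal (Real.one_le_exp (by positivity))
      · exact le_rfl

lemma analytic {μ : Measure ℝ} [IsProbabilityMeasure μ] (hμ : ∀ᵐ y ∂μ, 0 ≤ y)
    {α : ℝ} (hα : 0 < α)
    (hRV : ∀ l : ℝ, 0 < l → Tendsto (fun x => (μ (Ioi x)).toReal / (μ (Ioi (l * x))).toReal)
      atTop (nhds (l ^ α))) (ε : ℝ) (hε : 0 < ε) :
    ∃ m0 : ℕ, ∀ m : ℕ, m0 ≤ m → ∀ z : ℝ, (m : ℝ) ^ (max 1 α⁻¹ + ε) ≤ z → ∃ l u : ℝ, 0 ≤ l ∧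
      (∫⁻ y, Wf l u y ∂μ) ^ m * (ENNReal.ofReal (Real.exp (-(l * z))) + 2 * μ (Ioi u)) ≤
        m * μ (Ioi z) := by
  set T : ℝ → ℝ := fun x => (μ (Ioi x)).toReal with hTdef
  have hT : Antitone T := fun a b h =>
    ENNReal.toReal_mono (measure_ne_top _ _) (measure_mono (Ioi_subset_Ioi h))
  have h0 : ∀ x, 0 ≤ T x := fun x => ENNReal.toReal_nonneg
  have hT1 : ∀ x, T x ≤ 1 := fun x => ENNReal.toReal_le_of_le_ofReal zero_le_one
    (by simpa using prob_le_one)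
  set D := max 1 α⁻¹ + ε with hD
  have hD1 : 1 < D := by have := le_max_left 1 α⁻¹; linarith
  have hD2 : α⁻¹ < D := by have := le_max_right 1 α⁻¹; linarith
  have hD0 : 0 < D := by linarith
  have hb1 : D⁻¹ < min 1 α := by
    refine lt_min (inv_lt_one_of_one_lt₀ hD1) ?_
    exact inv_lt_of_inv_lt₀ hα hD2
  set β := D⁻¹ with hβ
  have hβ0 : 0 < β := inv_pos.2 hD0
  obtain ⟨g, hg1, hg2⟩ := exists_between hb1
  have hgα : g < α := hg2.trans_le (min_le_right _ _)
  have hg1' : g ≤ 1 := (hg2.trans_le (min_le_left _ _)).le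
  have hg0 : 0 < g := hβ0.trans hg1
  obtain ⟨g', hgg, hgα'⟩ := exists_between hgα
  obtain ⟨C, x0, hC, hx0, hup⟩ := T_upper hT h0 hT1 hRV g' (hg0.trans hgg) hgα'
  have hfin := moment_fin hμ hg0 hgg hC hx0 hup
  set I := ∫⁻ y, ENNReal.ofReal (y ^ g) ∂μ with hI
  set ρ := (g - β) / 2 with hρ
  have hρ0 : 0 < ρ := by rw [hρ]; linarith
  obtain ⟨K, hK⟩ := exists_nat_ge (max 1 ((α + 3) / ρ))
  have hK1 : (1 : ℝ) ≤ K := (le_max_left _ _).trans hK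
  have hK2 : α + 3 ≤ ρ * K := by
    have := (le_max_right _ _).trans hK
    rw [div_le_iff₀ hρ0] at this; linarith
  have hK0 : (0 : ℝ) < K := by linarith
  have ev : ∀ᶠ u in atTop, (1 : ℝ) ≤ u ∧ (K : ℝ) ^ β * I.toReal * u ^ (-ρ) ≤ 1 ∧
      u ^ (-(ρ * K)) ≤ T (K * u) ∧ T u ≤ ((K : ℝ) ^ α + 1) * T (K * u) := by
    have e1 : ∀ᶠ u : ℝ in atTop, (K : ℝ) ^ β * I.toReal * u ^ (-ρ) ≤ 1 := by
      have := (tendsto_rpow_neg_atTop hρ0).const_mul ((K : ℝ) ^ β * I.toReal)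
      rw [mul_zero] at this
      exact (this.eventually (gt_mem_nhds one_pos)).mono fun _ h => h.le
    have e2 : ∀ᶠ u : ℝ in atTop, (K * u) ^ (-(α + 2)) ≤ T (K * u) :=
      (tendsto_id.const_mul_atTop hK0).eventually (T_lower hT h0 hα hRV)
    filter_upwards [eventually_ge_atTop 1, e1, e2, eventually_ge_atTop ((K : ℝ) ^ (α + 2)),
      T_ratio hT h0 hRV K ((K : ℝ) ^ α + 1) hK0 (by linarith)] with u hu a1 a2 a3 a4
    refine ⟨hu, a1, le_trans ?_ a2, a4⟩
    have hup : 0 < u := by linarith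
    calc u ^ (-(ρ * K)) ≤ u ^ (-(α + 3)) :=
          Real.rpow_le_rpow_of_exponent_le hu (by linarith)
      _ = u ^ (-(α + 2)) * u⁻¹ := by
          rw [← Real.rpow_neg_one u, ← Real.rpow_add hup]; congr 1; ring
      _ ≤ u ^ (-(α + 2)) * ((K : ℝ) ^ (α + 2))⁻¹ := by gcongr
      _ = _ := by
          rw [Real.mul_rpow hK0.le hup.le, Real.rpow_neg hK0.le]; ring
  obtain ⟨u0, hu0⟩ := ev.exists_forall_of_atTop
  obtain ⟨m0, hm0⟩ := exists_nat_ge (max 1 (max (K * u0)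
    (Real.exp 1 * (1 + 2 * ((K : ℝ) ^ α + 1)))))
  refine ⟨m0, fun m hm z hz => ?_⟩
  have hmm : (m0 : ℝ) ≤ m := by exact_mod_cast hm
  have hm1 : (1 : ℝ) ≤ m := ((le_max_left _ _).trans hm0).trans hmm
  have hm2 : K * u0 ≤ m := (((le_max_left _ _).trans (le_max_right _ _)).trans hm0).trans hmm
  have hm3 : Real.exp 1 * (1 + 2 * ((K : ℝ) ^ α + 1)) ≤ m :=
    (((le_max_right _ _).trans (le_max_right _ _)).trans hm0).trans hmm
  have hmz : (m : ℝ) ≤ z := by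
    refine le_trans ?_ hz
    calc (m : ℝ) = (m : ℝ) ^ (1 : ℝ) := (Real.rpow_one _).symm
      _ ≤ _ := Real.rpow_le_rpow_of_exponent_le hm1 hD1.le
  have hz0 : 0 < z := by linarith
  have hmzβ : (m : ℝ) ≤ z ^ β := by
    calc (m : ℝ) = ((m : ℝ) ^ D) ^ β := by
          rw [← Real.rpow_mul (by linarith), hβ, mul_inv_cancel₀ hD0.ne', Real.rpow_one]
      _ ≤ _ := by gcongr
  set u := z / K with hu
  have hzu : z = K * u := by rw [hu]; field_simp
  have hu0u : u0 ≤ u := by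
    rw [hu, le_div_iff₀ hK0]; linarith
  obtain ⟨b1, b2, b3, b4⟩ := hu0 u hu0u
  have hup : 0 < u := by linarith
  rw [← hzu] at b3 b4
  have hl : 0 ≤ ρ * Real.log u / u := by
    have := Real.log_nonneg b1
    positivity
  refine ⟨ρ * Real.log u / u, u, hl, ?_⟩
  have x1 : Real.exp (ρ * Real.log u / u * u) = u ^ ρ := by
    rw [Real.rpow_def_of_pos hup]; congr 1; field_simp
  have x2 : Real.exp (-(ρ * Real.log u / u * z)) = u ^ (-(ρ * K)) := by
    rw [Real.rpow_def_of_pos hup, hzu]; congr 1; field_simp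
  have hW := W_bound (u := u) hμ hg0 hg1' hl hup
  rw [x1] at hW
  have hW' : ∫⁻ y, Wf (ρ * Real.log u / u) u y ∂μ ≤ ENNReal.ofReal (Real.exp (1 / m)) := by
    refine hW.trans ?_
    rw [← hI, ← ENNReal.ofReal_toReal hfin.ne, ← ENNReal.ofReal_mul (by positivity),
      ← ENNReal.ofReal_one, ← ENNReal.ofReal_add (by norm_num) (by positivity)]
    apply ENNReal.ofReal_le_ofReal
    refine le_trans ?_ (Real.add_one_le_exp _)
    rw [add_comm]
    gcongr
    rw [le_div_iff₀ (by linarith)]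
    calc u ^ ρ * u ^ (-g) * I.toReal * m ≤ u ^ ρ * u ^ (-g) * I.toReal * (K ^ β * u ^ β) := by
          rw [hzu, Real.mul_rpow hK0.le hup.le] at hmzβ
          gcongr
      _ = (K : ℝ) ^ β * I.toReal * (u ^ ρ * u ^ (-g) * u ^ β) := by ring
      _ = (K : ℝ) ^ β * I.toReal * u ^ (-ρ) := by
          rw [← Real.rpow_add hup, ← Real.rpow_add hup]; congr 2; rw [hρ]; ring
      _ ≤ 1 := b2
  have cT : ∀ x, μ (Ioi x) = ENNReal.ofReal (T x) := fun x =>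
    (ENNReal.ofReal_toReal (measure_ne_top _ _)).symm
  have e2 : (2 : ENNReal) = ENNReal.ofReal 2 := by simp
  rw [x2, cT u, cT z, e2, ← ENNReal.ofReal_mul (by norm_num),
    ← ENNReal.ofReal_add (by positivity) (mul_nonneg (by norm_num) (h0 _))]
  have e3 : (m : ENNReal) = ENNReal.ofReal m := (ENNReal.ofReal_natCast m).symm
  calc _ ≤ (ENNReal.ofReal (Real.exp (1 / m))) ^ m *
        ENNReal.ofReal (u ^ (-(ρ * K)) + 2 * T u) := by gcongr
    _ = ENNReal.ofReal (Real.exp 1 * (u ^ (-(ρ * K)) + 2 * T u)) := by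
        rw [← ENNReal.ofReal_pow (Real.exp_nonneg _), ← Real.exp_nat_mul,
          mul_one_div_cancel (by linarith), ENNReal.ofReal_mul (Real.exp_nonneg _)]
    _ ≤ ENNReal.ofReal (m * T z) := by
        apply ENNReal.ofReal_le_ofReal
        calc _ ≤ Real.exp 1 * (T z + 2 * (((K : ℝ) ^ α + 1) * T z)) := by gcongr
          _ = (Real.exp 1 * (1 + 2 * ((K : ℝ) ^ α + 1))) * T z := by ring
          _ ≤ _ := by gcongr
    _ = _ := by rw [e3, ENNReal.ofReal_mul (by positivity)]

end analysis

/-- Proposition `theta`: for every `ε > 0` there is `N₀` such that for all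
`N ≥ N₀`, all integers `m` with `(1/2)log₂ N ≤ m ≤ 2 log₂ N`, all
`x ≥ m^{max(1,1/α)+ε}/c_N` and all `n ≥ 0`, almost surely
`P(θ^{(m)}_{n+1} − θ^{(m)}_n > x | F_{n−m}) ≤ N m 2^{m+1} / h(c_N x)²`
(note `1/h(c_N x) = P(X > c_N x)`). -/
theorem stmt_1 {Ω : Type*} [MeasurableSpace Ω] (P : Measure Ω) [IsProbabilityMeasure P]
    (X : Ω → ℝ) (hXmeas : Measurable X) (hXpos : ∀ ω, 0 ≤ X ω)
    (α : ℝ) (hα : 0 < α)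
    (hRV : ∀ l : ℝ, 0 < l →
      Tendsto (fun x => tail P X x / tail P X (l * x)) atTop (nhds (l ^ α)))
    (ξ : (N : ℕ) → ℕ → Fin N → Fin 2 → Ω → ℝ)
    (hξmeas : ∀ N n i j, Measurable (ξ N n i j))
    (hξpos : ∀ N n i j ω, 0 ≤ ξ N n i j ω)
    (hξdist : ∀ N n i j, Measure.map (ξ N n i j) P = Measure.map X P)
    (hξindep : ∀ N, iIndepFun
      (fun p : ℕ × Fin N × Fin 2 => ξ N p.1 p.2.1 p.2.2) P)
    (ε : ℝ) (hε : 0 < ε) :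
    ∃ N₀ : ℕ, ∀ N : ℕ, N₀ ≤ N → ∀ m : ℕ,
      (1 / 2 : ℝ) * Real.logb 2 N ≤ m → (m : ℝ) ≤ 2 * Real.logb 2 N →
      ∀ x : ℝ, (m : ℝ) ^ (max 1 α⁻¹ + ε) / cN P X N ≤ x → ∀ n : ℕ,
      ∀ᵐ ω ∂P,
        (P[Set.indicator
            {ω' | x < theta N m (fun k i j => ξ N k i j ω' / cN P X N) (n + 1) -
                theta N m (fun k i j => ξ N k i j ω' / cN P X N) n}
            (fun _ => (1 : ℝ)) | brwFilt N (ξ N) (n - m)]) ω ≤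
          (N : ℝ) * m * 2 ^ (m + 1) * (tail P X (cN P X N * x)) ^ 2 := by

  set μ := Measure.map X P with hμdef
  have : IsProbabilityMeasure μ := Measure.isProbabilityMeasure_map hXmeas.aemeasurable
  have hμ : ∀ᵐ y ∂μ, 0 ≤ y := by
    rw [hμdef, ae_map_iff hXmeas.aemeasurable measurableSet_Ici]
    exact Filter.Eventually.of_forall hXpos
  have ht : ∀ x, tail P X x = (μ (Ioi x)).toReal := by
    intro x
    rw [hμdef, Measure.map_apply hXmeas measurableSet_Ioi]
    rfl
  obtain ⟨m0, hm0⟩ := analytic hμ hα (by simpa only [ht] using hRV) ε hε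
  obtain ⟨N1, hN1⟩ := exists_nat_ge ((2 : ℝ) ^ (2 * (m0 : ℝ)))
  refine ⟨max 1 N1, fun N hN m hm _ x hx n => ?_⟩
  have hNpos : 0 < N := lt_of_lt_of_le one_pos ((le_max_left _ _).trans hN)
  have hmm0 : m0 ≤ m := by
    have h1 : (2 : ℝ) ^ (2 * (m0 : ℝ)) ≤ N := hN1.trans (by
      exact_mod_cast (le_max_right _ _).trans hN)
    have h2 : 2 * (m0 : ℝ) ≤ Real.logb 2 N :=
      (Real.le_logb_iff_rpow_le (by norm_num) (by exact_mod_cast hNpos)).2 h1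
    have : (m0 : ℝ) ≤ m := by linarith
    exact_mod_cast this
  set c := cN P X N with hc
  have hc0 : 0 ≤ c := Real.sInf_nonneg fun y hy => hy.1
  have hx0 : 0 ≤ x := le_trans (by positivity) hx
  set s := n - m with hs
  set r := n - s with hr
  have hsn : s + r = n := by omega
  have hrm : r ≤ m := by omega
  refine condexp_bound (brwFilt_le (hξmeas N) s) _
    (⋃ p : Fin N × Fin 2, (Uset N (ξ N) c x s n p.1 ∩ {ω | x < ξ N n p.1 p.2 ω / c}))
    ?_ ?_ _ (by positivity) ?_
  · intro ω hω
    obtain ⟨i, b, h1, h2⟩ := det N m hNpos _ n x hx0 hω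
    exact mem_iUnion.2 ⟨(i, b), h1, h2⟩
  · refine MeasurableSet.iUnion fun p => MeasurableSet.inter ?_ ?_
    · exact brwFilt_le (hξmeas N) n _ (Uset_meas (ξ N) c x (by omega) p.1)
    · exact aux_lt _ _ x ((hξmeas N n p.1 p.2).div_const c)
  · intro A hA
    rcases hc0.eq_or_lt with h0 | hcpos
    · have : (⋃ p : Fin N × Fin 2, (Uset N (ξ N) c x s n p.1 ∩
          {ω | x < ξ N n p.1 p.2 ω / c})) = ∅ := by
        refine iUnion_eq_empty.2 fun p => ?_
        ext ω
        simp [← h0, hx0]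
      rw [this]; simp
    · have hz : (m : ℝ) ^ (max 1 α⁻¹ + ε) ≤ c * x := by
        rw [div_le_iff₀ hcpos] at hx; linarith
      obtain ⟨l, u, hl, hb⟩ := hm0 m hmm0 (c * x) hz
      have hW1 := W_ge (u := u) hμ hl
      have h1 := prob_bound (hξmeas N) (hξpos N) (hξindep N) (hξdist N) c x l u hcpos hl hW1 s r A hA
      rw [hsn] at h1
      refine h1.trans ?_
      rw [ht]
      set p := μ (Ioi (c * x)) with hp
      set M := ∫⁻ y, Wf l u y ∂μ with hM
      set Z := ENNReal.ofReal (Real.exp (-(l * (c * x)))) + 2 * μ (Ioi u) with hZ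
      have e : ENNReal.ofReal ((N : ℝ) * m * 2 ^ (m + 1) * p.toReal ^ 2) =
          N * m * 2 ^ (m + 1) * p ^ 2 := by
        rw [ENNReal.ofReal_mul (by positivity), ENNReal.ofReal_mul (by positivity),
          ENNReal.ofReal_mul (by positivity), ENNReal.ofReal_natCast, ENNReal.ofReal_natCast,
          ENNReal.ofReal_pow (by norm_num), ENNReal.ofReal_pow ENNReal.toReal_nonneg,
          ENNReal.ofReal_toReal (measure_ne_top _ _)]
        simp [hp]
      rw [e]
      have h2M : 1 ≤ 2 * M := by
        calc (1 : ENNReal) ≤ 2 * 1 := by norm_num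
          _ ≤ 2 * M := by gcongr
      calc 2 * p * (N * (2 * M) ^ r * Z * P A) ≤ 2 * p * (N * (2 * M) ^ m * Z * P A) := by
            gcongr
        _ = 2 * p * N * 2 ^ m * (M ^ m * Z) * P A := by rw [mul_pow]; ring
        _ ≤ 2 * p * N * 2 ^ m * (m * p) * P A := by gcongr
        _ = _ := by ring

end
end
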